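/- Suppose A and ε are conditionally independent given (η, U), and f : 𝓐 × ℝ × 𝓤 → ℝ is a nonnegative measurable conditional density of A given (η, U) with respect to μ_A, that is, for every bounded measurable φ : 𝓐 × ℝ × 𝓤 → ℝ one has E[φ(A, η, U)] = E[∫_𝓐 φ(a, η, U) f(a, η, U) dμ_A(a)]. Assume the common-support condition: f(A, η, U) > 0 almost surely, and f(a, η(ω), U(ω)) > 0 for μ_A ⊗ ℙ-almost every (a, ω) with π(a) ≠ 0. Assume Y·π(A)/f(A,η,U) is integrable and (a,ω) ↦ g(a, U(ω), ε(ω))π(a) is μ_A ⊗ ℙ-integrable. Then the inverse-probability-weighting identity holds: E[Y · π(A)/f(A, η, U)] = J := E[∫_𝓐 g(a, U, ε) π(a) dμ_A(a)]. -/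

import Mathlib

open MeasureTheory ProbabilityTheory

/-!
Conditional independence of `A` and `ε` given `H = (η, U)` says that a conditional density
`f(a, h)` of `A` given `H` is also a conditional density of `A` given `(H, ε)`. Hence the joint law
of `(A, H, ε)` is `f(a, h)` times the product of `μ_A` and the law of `(H, ε)`; dividing the
integrand by `f` cancels this weight wherever `π ≠ 0`, and Fubini on what is left gives `J`.
-/

open scoped ENNReal

section DensityFromTestFunctions

variable {α β : Type*} [MeasurableSpace α] [MeasurableSpace β]
  {ρ : Measure (α × β)} [IsFiniteMeasure ρ] {μ : Measure α} [SFinite μ] {f : α × β → ℝ}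

theorem ae_integrable_section_of_forall_integral_eq (hf : Measurable f)
    (h : ∀ φ : α × β → ℝ, Measurable φ → (∃ C, ∀ x, |φ x| ≤ C) →
      ∫ x, φ x ∂ρ = ∫ b, ∫ a, φ (a, b) * f (a, b) ∂μ ∂ρ.snd) :
    ∀ᵐ b ∂ρ.snd, Integrable (fun a ↦ f (a, b)) μ := by
  set N : Set β := {b | Integrable (fun a ↦ f (a, b)) μ}ᶜ
  have hN : MeasurableSet N :=
    (measurableSet_integrable (f := fun b a ↦ f (a, b))
      (hf.comp measurable_swap).stronglyMeasurable).compl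
  have hφ := h (fun x ↦ N.indicator 1 x.2) ((measurable_one.indicator hN).comp measurable_snd)
    ⟨1, fun x ↦ by by_cases hx : x.2 ∈ N <;> simp [hx]⟩
  -- On `N` the inner integral takes the junk value `0`, off `N` the test function vanishes.
  have hinner (b : β) : ∫ a, N.indicator (1 : β → ℝ) b * f (a, b) ∂μ = 0 := by
    by_cases hb : b ∈ N
    · simpa [hb] using integral_undef hb
    · simp [hb]
  have hreal : ρ.snd.real N = 0 := by
    rw [← integral_indicator_one hN, Measure.snd,
      integral_map (by fun_prop) (measurable_one.indicator hN).aestronglyMeasurable, hφ]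
    simp only [hinner, integral_zero]
  exact (measureReal_eq_zero_iff).1 hreal

theorem integrable_prod_snd_of_forall_integral_eq (hf : Measurable f) (hf_nonneg : ∀ x, 0 ≤ f x)
    (h : ∀ φ : α × β → ℝ, Measurable φ → (∃ C, ∀ x, |φ x| ≤ C) →
      ∫ x, φ x ∂ρ = ∫ b, ∫ a, φ (a, b) * f (a, b) ∂μ ∂ρ.snd) :
    Integrable f (μ.prod ρ.snd) := by
  refine (integrable_prod_iff' hf.aestronglyMeasurable).2
    ⟨ae_integrable_section_of_forall_integral_eq hf h, ?_⟩
  simp only [Real.norm_of_nonneg (hf_nonneg _)]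
  by_contra hnot
  have hmass : ρ.real Set.univ = ∫ b, ∫ a, f (a, b) ∂μ ∂ρ.snd := by
    simpa using h 1 measurable_one ⟨1, by simp⟩
  have hρ : ρ = 0 := by
    rwa [integral_undef hnot, measureReal_eq_zero_iff, Measure.measure_univ_eq_zero] at hmass
  simp [hρ] at hnot

theorem eq_withDensity_prod_snd_of_forall_integral_eq (hf : Measurable f)
    (hf_nonneg : ∀ x, 0 ≤ f x)
    (h : ∀ φ : α × β → ℝ, Measurable φ → (∃ C, ∀ x, |φ x| ≤ C) →
      ∫ x, φ x ∂ρ = ∫ b, ∫ a, φ (a, b) * f (a, b) ∂μ ∂ρ.snd) :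
    ρ = (μ.prod ρ.snd).withDensity fun x ↦ ENNReal.ofReal (f x) := by
  have hint : Integrable f (μ.prod ρ.snd) :=
    integrable_prod_snd_of_forall_integral_eq hf hf_nonneg h
  ext s hs
  have hreal : ρ.real s = ∫ x in s, f x ∂μ.prod ρ.snd := calc
    ρ.real s = ∫ x, s.indicator 1 x ∂ρ := (integral_indicator_one hs).symm
    _ = ∫ b, ∫ a, s.indicator 1 (a, b) * f (a, b) ∂μ ∂ρ.snd :=
      h _ (measurable_one.indicator hs) ⟨1, fun x ↦ by by_cases hx : x ∈ s <;> simp [hx]⟩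
    _ = ∫ b, ∫ a, s.indicator f (a, b) ∂μ ∂ρ.snd := by
      simp only [← Set.indicator_mul_left, Pi.one_apply, one_mul]
    _ = ∫ x in s, f x ∂μ.prod ρ.snd := by
      rw [← integral_prod_symm _ (hint.indicator hs), integral_indicator hs]
  rw [← ofReal_measureReal, hreal, withDensity_apply _ hs,
    ofReal_integral_eq_lintegral_ofReal hint.integrableOn (ae_of_all _ hf_nonneg)]

end DensityFromTestFunctions

section InverseWeighting

variable {α : Type*} [MeasurableSpace α] {ν : Measure α} {f F : α → ℝ}

theorem toReal_ofReal_smul_div_ae_eq (hsupp : ∀ᵐ x ∂ν, F x ≠ 0 → 0 < f x) :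
    (fun x ↦ (ENNReal.ofReal (f x)).toReal • (F x / f x)) =ᵐ[ν] F := by
  filter_upwards [hsupp] with x hx
  by_cases hF : F x = 0
  · simp [hF]
  · rw [ENNReal.toReal_ofReal (hx hF).le, smul_eq_mul, mul_div_cancel₀ _ (hx hF).ne']

theorem integrable_div_withDensity_iff (hf : Measurable f)
    (hsupp : ∀ᵐ x ∂ν, F x ≠ 0 → 0 < f x) :
    Integrable (fun x ↦ F x / f x) (ν.withDensity fun x ↦ ENNReal.ofReal (f x)) ↔
      Integrable F ν := by
  rw [integrable_withDensity_iff_integrable_smul' (by fun_prop) (by simp),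
    integrable_congr (toReal_ofReal_smul_div_ae_eq hsupp)]

theorem integral_div_withDensity (hf : Measurable f) (hsupp : ∀ᵐ x ∂ν, F x ≠ 0 → 0 < f x) :
    ∫ x, F x / f x ∂ν.withDensity (fun x ↦ ENNReal.ofReal (f x)) = ∫ x, F x ∂ν := by
  rw [integral_withDensity_eq_integral_toReal_smul (by fun_prop) (by simp),
    integral_congr_ae (toReal_ofReal_smul_div_ae_eq hsupp)]

end InverseWeighting

section ConditionalIndependence

variable {Ω α γ : Type*} {m mΩ : MeasurableSpace Ω} [StandardBorelSpace Ω]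
  [MeasurableSpace α] [MeasurableSpace γ] {hm : m ≤ mΩ} {P : Measure Ω} [IsFiniteMeasure P]
  {A : Ω → α} {ε : Ω → γ}

theorem setIntegral_condExp_preimage_of_condIndepFun (hA : Measurable A) (hε : Measurable ε)
    (hindep : CondIndepFun m hm A ε P) {B : Set α} (hB : MeasurableSet B) {D : Set γ}
    (hD : MeasurableSet D) {s : Set Ω} (hs : MeasurableSet[m] s) :
    ∫ ω in s ∩ ε ⁻¹' D, (P⟦A ⁻¹' B | m⟧) ω ∂P = P.real (A ⁻¹' B ∩ (s ∩ ε ⁻¹' D)) := by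
  have hAB : MeasurableSet (A ⁻¹' B) := hA hB
  have hεD : MeasurableSet (ε ⁻¹' D) := hε hD
  set pB : Ω → ℝ := P⟦A ⁻¹' B | m⟧
  have hprod : pB * (ε ⁻¹' D).indicator (fun _ ↦ (1 : ℝ)) = (ε ⁻¹' D).indicator pB := by
    ext ω
    by_cases hω : ω ∈ ε ⁻¹' D <;> simp [hω]
  have hind : Integrable ((ε ⁻¹' D).indicator pB) P := integrable_condExp.indicator hεD
  have hcond : P[(ε ⁻¹' D).indicator pB | m] =ᵐ[P] P⟦A ⁻¹' B ∩ ε ⁻¹' D | m⟧ := by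
    have hpull := condExp_mul_of_stronglyMeasurable_left (μ := P) (m := m)
      (g := (ε ⁻¹' D).indicator fun _ ↦ (1 : ℝ)) stronglyMeasurable_condExp (hprod ▸ hind)
      ((integrable_const 1).indicator hεD)
    rw [hprod] at hpull
    exact hpull.trans
      ((condIndepFun_iff_condExp_inter_preimage_eq_mul hA hε).1 hindep B D hB hD).symm
  calc ∫ ω in s ∩ ε ⁻¹' D, pB ω ∂P
      = ∫ ω in s, (P[(ε ⁻¹' D).indicator pB | m]) ω ∂P := by
        rw [setIntegral_condExp hm hind hs, setIntegral_indicator hεD]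
    _ = ∫ ω in s, (P⟦A ⁻¹' B ∩ ε ⁻¹' D | m⟧) ω ∂P := integral_congr_ae (ae_restrict_of_ae hcond)
    _ = P.real (A ⁻¹' B ∩ (s ∩ ε ⁻¹' D)) := by
        rw [setIntegral_condExp hm ((integrable_const 1).indicator (hAB.inter hεD)) hs,
          setIntegral_indicator (hAB.inter hεD), setIntegral_const, smul_eq_mul, mul_one,
          Set.inter_left_comm]

end ConditionalIndependence

/-- `f` is a conditional density of `A` given `H` with respect to `μ`: the joint law of `(A, H)`
has density `f` with respect to the product of `μ` and the law of `H`. -/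
def HasCondDensity {Ω α β : Type*} [MeasurableSpace Ω] [MeasurableSpace α] [MeasurableSpace β]
    (A : Ω → α) (H : Ω → β) (f : α × β → ℝ≥0∞) (P : Measure Ω) (μ : Measure α) : Prop :=
  P.map (fun ω ↦ (A ω, H ω)) = (μ.prod (P.map H)).withDensity f

section ConditionalDensity

variable {Ω α β γ : Type*} [MeasurableSpace Ω] [MeasurableSpace α] [MeasurableSpace β]
  [MeasurableSpace γ] {P : Measure Ω} {μ : Measure α}
  {A : Ω → α} {H : Ω → β} {ε : Ω → γ}

theorem HasCondDensity.integrable_div {f F : α × β → ℝ}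
    (h : HasCondDensity A H (fun x ↦ ENNReal.ofReal (f x)) P μ)
    (hA : Measurable A) (hH : Measurable H) (hf : Measurable f)
    (hsupp : ∀ᵐ x ∂μ.prod (P.map H), F x ≠ 0 → 0 < f x)
    (hint : Integrable F (μ.prod (P.map H))) :
    Integrable (fun ω ↦ F (A ω, H ω) / f (A ω, H ω)) P := by
  have hint' : Integrable (fun x ↦ F x / f x) (P.map fun ω ↦ (A ω, H ω)) := by
    rw [h]
    exact (integrable_div_withDensity_iff hf hsupp).2 hint
  exact hint'.comp_measurable (hA.prodMk hH)

variable [SFinite μ]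

theorem hasCondDensity_of_forall_integral_eq [IsFiniteMeasure P]
    (hA : Measurable A) (hH : Measurable H) {f : α × β → ℝ} (hf : Measurable f)
    (hf_nonneg : ∀ x, 0 ≤ f x)
    (h : ∀ φ : α × β → ℝ, Measurable φ → (∃ C, ∀ x, |φ x| ≤ C) →
      ∫ ω, φ (A ω, H ω) ∂P = ∫ ω, ∫ a, φ (a, H ω) * f (a, H ω) ∂μ ∂P) :
    HasCondDensity A H (fun x ↦ ENNReal.ofReal (f x)) P μ := by
  have hsnd : (P.map fun ω ↦ (A ω, H ω)).snd = P.map H := Measure.snd_map_prodMk hA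
  have hlaw := eq_withDensity_prod_snd_of_forall_integral_eq (ρ := P.map fun ω ↦ (A ω, H ω))
    (μ := μ) hf hf_nonneg fun φ hφ hbound ↦ by
      have hinner : StronglyMeasurable fun b ↦ ∫ a, φ (a, b) * f (a, b) ∂μ :=
        (hφ.mul hf).stronglyMeasurable.integral_prod_left'
      rw [hsnd, integral_map (by fun_prop) hφ.aestronglyMeasurable,
        integral_map hH.aemeasurable hinner.aestronglyMeasurable]
      exact h φ hφ hbound
  rwa [hsnd] at hlaw

theorem withDensity_prod_map_apply_prod [SFinite P] (hH : Measurable H) {f : α × β → ℝ≥0∞}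
    (hf : Measurable f) {B : Set α} (hB : MeasurableSet B) {C : Set β} (hC : MeasurableSet C) :
    (μ.prod (P.map H)).withDensity f (B ×ˢ C) =
      ∫⁻ ω in H ⁻¹' C, ∫⁻ a in B, f (a, H ω) ∂μ ∂P := by
  rw [withDensity_apply _ (hB.prod hC), ← Measure.prod_restrict,
    lintegral_prod_symm _ hf.aemeasurable, setLIntegral_map hC hf.lintegral_prod_left' hH]

namespace HasCondDensity

theorem setLIntegral_preimage [SFinite P] {f : α × β → ℝ≥0∞} (h : HasCondDensity A H f P μ)
    (hA : Measurable A) (hH : Measurable H) (hf : Measurable f) {B : Set α}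
    (hB : MeasurableSet B) {C : Set β} (hC : MeasurableSet C) :
    ∫⁻ ω in H ⁻¹' C, ∫⁻ a in B, f (a, H ω) ∂μ ∂P = P (A ⁻¹' B ∩ H ⁻¹' C) := by
  rw [← withDensity_prod_map_apply_prod hH hf hB hC, ← h,
    Measure.map_apply (by fun_prop) (hB.prod hC), Set.mk_preimage_prod]

theorem lintegral_ne_top [IsFiniteMeasure P] {f : α × β → ℝ≥0∞} (h : HasCondDensity A H f P μ)
    (hA : Measurable A) (hH : Measurable H) (hf : Measurable f) {B : Set α}
    (hB : MeasurableSet B) :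
    ∫⁻ ω, ∫⁻ a in B, f (a, H ω) ∂μ ∂P ≠ ∞ := by
  have hmass := h.setLIntegral_preimage hA hH hf hB MeasurableSet.univ
  rw [Set.preimage_univ, setLIntegral_univ] at hmass
  exact hmass ▸ measure_ne_top P _

theorem toReal_lintegral_ae_eq_condExp [IsFiniteMeasure P] {f : α × β → ℝ≥0∞}
    (h : HasCondDensity A H f P μ) (hA : Measurable A) (hH : Measurable H)
    (hf : Measurable f) {B : Set α} (hB : MeasurableSet B) :
    (fun ω ↦ (∫⁻ a in B, f (a, H ω) ∂μ).toReal) =ᵐ[P]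
      P⟦A ⁻¹' B | MeasurableSpace.comap H inferInstance⟧ := by
  have hk : Measurable fun b ↦ ∫⁻ a in B, f (a, b) ∂μ := hf.lintegral_prod_left'
  have hkH : Measurable fun ω ↦ ∫⁻ a in B, f (a, H ω) ∂μ := hk.comp hH
  have hfin : ∫⁻ ω, ∫⁻ a in B, f (a, H ω) ∂μ ∂P ≠ ∞ := h.lintegral_ne_top hA hH hf hB
  refine ae_eq_condExp_of_forall_setIntegral_eq hH.comap_le
    ((integrable_const 1).indicator (hA hB))
    (fun _ _ _ ↦ (integrable_toReal_of_lintegral_ne_top hkH.aemeasurable hfin).integrableOn) ?_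
    (hk.ennreal_toReal.comp (comap_measurable H)).stronglyMeasurable.aestronglyMeasurable
  rintro _ ⟨C, hC, rfl⟩ -
  rw [integral_toReal hkH.aemeasurable (ae_restrict_of_ae (ae_lt_top hkH hfin)),
    h.setLIntegral_preimage hA hH hf hB hC, setIntegral_indicator (hA hB), setIntegral_const,
    smul_eq_mul, mul_one, Set.inter_comm, Measure.real]

theorem prodMk_of_condIndepFun [StandardBorelSpace Ω] [IsFiniteMeasure P]
    {f : α × β → ℝ≥0∞} (h : HasCondDensity A H f P μ) (hA : Measurable A) (hH : Measurable H)
    (hε : Measurable ε) (hf : Measurable f)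
    (hindep : CondIndepFun (MeasurableSpace.comap H inferInstance) hH.comap_le A ε P) :
    HasCondDensity A (fun ω ↦ (H ω, ε ω)) (fun x ↦ f (x.1, x.2.1)) P μ := by
  refine Measure.ext_prod₃ fun {B C D} hB hC hD ↦ ?_
  have hk : Measurable fun ω ↦ ∫⁻ a in B, f (a, H ω) ∂μ := hf.lintegral_prod_left'.comp hH
  have hfin := h.lintegral_ne_top hA hH hf hB
  have hreal : P.real (A ⁻¹' B ∩ (H ⁻¹' C ∩ ε ⁻¹' D)) =
      (∫⁻ ω in H ⁻¹' C ∩ ε ⁻¹' D, ∫⁻ a in B, f (a, H ω) ∂μ ∂P).toReal := by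
    rw [← setIntegral_condExp_preimage_of_condIndepFun hA hε hindep hB hD ⟨C, hC, rfl⟩,
      ← integral_toReal hk.aemeasurable (ae_restrict_of_ae (ae_lt_top hk hfin))]
    exact integral_congr_ae
      (ae_restrict_of_ae (h.toReal_lintegral_ae_eq_condExp hA hH hf hB).symm)
  rw [withDensity_prod_map_apply_prod (by fun_prop) (by fun_prop) hB (hC.prod hD),
    Measure.map_apply (by fun_prop) (hB.prod (hC.prod hD)), Set.mk_preimage_prod,
    Set.mk_preimage_prod]
  exact (ENNReal.toReal_eq_toReal_iff' (measure_ne_top P _)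
    (ne_top_of_le_ne_top hfin (setLIntegral_le_lintegral _ _))).1 hreal

theorem integral_div_eq [SFinite P] {f F : α × β → ℝ}
    (h : HasCondDensity A H (fun x ↦ ENNReal.ofReal (f x)) P μ)
    (hA : Measurable A) (hH : Measurable H) (hf : Measurable f) (hF : Measurable F)
    (hsupp : ∀ᵐ x ∂μ.prod (P.map H), F x ≠ 0 → 0 < f x)
    (hint : Integrable F (μ.prod (P.map H))) :
    ∫ ω, F (A ω, H ω) / f (A ω, H ω) ∂P = ∫ ω, ∫ a, F (a, H ω) ∂μ ∂P := calc
  ∫ ω, F (A ω, H ω) / f (A ω, H ω) ∂P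
    = ∫ x, F x / f x ∂P.map (fun ω ↦ (A ω, H ω)) :=
      (integral_map (hA.prodMk hH).aemeasurable (hF.div hf).aestronglyMeasurable).symm
  _ = ∫ x, F x ∂μ.prod (P.map H) := by rw [h, integral_div_withDensity hf hsupp]
  _ = ∫ ω, ∫ a, F (a, H ω) ∂μ ∂P := by
    rw [integral_prod_symm _ hint, integral_map hH.aemeasurable
      hF.stronglyMeasurable.integral_prod_left'.aestronglyMeasurable]

end HasCondDensity

end ConditionalDensity

theorem icc_lemma5_ipw_observed_confounders_general
    {Ω 𝓐 𝓗 𝓔 : Type*} [MeasurableSpace Ω] [StandardBorelSpace Ω]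
    [MeasurableSpace 𝓐] [MeasurableSpace 𝓗] [MeasurableSpace 𝓔]
    (P : Measure Ω) [IsFiniteMeasure P] (μA : Measure 𝓐) [SFinite μA]
    (A : Ω → 𝓐) (H : Ω → 𝓗) (ε : Ω → 𝓔)
    (hA : Measurable A) (hH : Measurable H) (hε : Measurable ε)
    (g : 𝓐 × 𝓗 × 𝓔 → ℝ) (π : 𝓐 → ℝ) (hg : Measurable g) (hπ : Measurable π)
    (hindep : CondIndepFun (MeasurableSpace.comap H inferInstance) hH.comap_le A ε P)
    (f : 𝓐 × 𝓗 → ℝ) (hf : Measurable f) (hf_nonneg : ∀ x, 0 ≤ f x)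
    (hf_density : ∀ φ : 𝓐 × 𝓗 → ℝ, Measurable φ → (∃ C, ∀ x, |φ x| ≤ C) →
      ∫ ω, φ (A ω, H ω) ∂P = ∫ ω, ∫ a, φ (a, H ω) * f (a, H ω) ∂μA ∂P)
    (hf_pos : ∀ᵐ p ∂μA.prod P, π p.1 ≠ 0 → 0 < f (p.1, H p.2))
    (hint : Integrable (fun p : 𝓐 × Ω ↦ g (p.1, H p.2, ε p.2) * π p.1) (μA.prod P)) :
    Integrable (fun ω ↦ g (A ω, H ω, ε ω) * π (A ω) / f (A ω, H ω)) P ∧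
      ∫ ω, g (A ω, H ω, ε ω) * π (A ω) / f (A ω, H ω) ∂P =
        ∫ ω, ∫ a, g (a, H ω, ε ω) * π a ∂μA ∂P := by
  have hdens : HasCondDensity A (fun ω ↦ (H ω, ε ω))
      (fun x ↦ ENNReal.ofReal (f (x.1, x.2.1))) P μA :=
    (hasCondDensity_of_forall_integral_eq hA hH hf hf_nonneg hf_density).prodMk_of_condIndepFun
      hA hH hε hf.ennreal_ofReal hindep
  have hHε : Measurable fun ω ↦ (H ω, ε ω) := hH.prodMk hε
  have hpres : MeasurePreserving (Prod.map id fun ω ↦ (H ω, ε ω)) (μA.prod P)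
      (μA.prod (P.map fun ω ↦ (H ω, ε ω))) :=
    (MeasurePreserving.id μA).prod (hHε.measurePreserving P)
  have hf' : Measurable fun x : 𝓐 × 𝓗 × 𝓔 ↦ f (x.1, x.2.1) := by fun_prop
  have hF : Measurable fun x : 𝓐 × 𝓗 × 𝓔 ↦ g x * π x.1 := by fun_prop
  have hsupp : ∀ᵐ x ∂μA.prod (P.map fun ω ↦ (H ω, ε ω)),
      g x * π x.1 ≠ 0 → 0 < f (x.1, x.2.1) := by
    rw [← hpres.map_eq]
    refine (ae_map_iff hpres.aemeasurable
      ((hF (measurableSet_singleton 0).compl).imp (measurableSet_lt measurable_const hf'))).2 ?_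
    filter_upwards [hf_pos] with p hp hne using hp (right_ne_zero_of_mul hne)
  have hint' : Integrable (fun x ↦ g x * π x.1) (μA.prod (P.map fun ω ↦ (H ω, ε ω))) :=
    (hpres.integrable_comp hF.aestronglyMeasurable).1 hint
  exact ⟨hdens.integrable_div hA hHε hf' hsupp hint',
    hdens.integral_div_eq hA hHε hf' hF hsupp hint'⟩

/-- **Lemma 5, IPW part (ICC paper).** With observed confounders `(η, U)`,
if `A ⫫ ε | (η, U)`, `f` is a conditional density of `A` given `(η, U)` w.r.t.
`μ_A` with the common-support property, then the inverse-probability-weighting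
identity `E[Y π(A) / f(A, η, U)] = J := E[∫ g(a, U, ε) π(a) dμ_A(a)]` holds. -/
theorem icc_lemma5_ipw_observed_confounders
    {Ω 𝓐 𝓤 𝓔 : Type*}
    [MeasurableSpace Ω] [StandardBorelSpace Ω] [Nonempty Ω]
    [MeasurableSpace 𝓐] [StandardBorelSpace 𝓐]
    [MeasurableSpace 𝓤] [StandardBorelSpace 𝓤]
    [MeasurableSpace 𝓔] [StandardBorelSpace 𝓔]
    (P : Measure Ω) [IsProbabilityMeasure P]
    (μA : Measure 𝓐) [SigmaFinite μA]
    (A : Ω → 𝓐) (U : Ω → 𝓤) (ε : Ω → 𝓔) (η : Ω → ℝ)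
    (hA : Measurable A) (hU : Measurable U) (hε : Measurable ε) (hη : Measurable η)
    (g : 𝓐 × 𝓤 × 𝓔 → ℝ) (π : 𝓐 → ℝ) (hg : Measurable g) (hπ : Measurable π)
    -- A ⫫ ε | (η, U)
    (hindep : CondIndepFun
      (MeasurableSpace.comap (fun ω => (η ω, U ω)) inferInstance)
      (Measurable.comap_le (by fun_prop)) A ε P)
    (f : 𝓐 × ℝ × 𝓤 → ℝ) (hf : Measurable f) (hf_nonneg : ∀ x, 0 ≤ f x)
    -- f is a conditional density of A given (η, U) w.r.t. μ_A
    (hf_density : ∀ φ : 𝓐 × ℝ × 𝓤 → ℝ, Measurable φ → (∃ C, ∀ x, |φ x| ≤ C) →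
      ∫ ω, φ (A ω, η ω, U ω) ∂P
        = ∫ ω, (∫ a, φ (a, η ω, U ω) * f (a, η ω, U ω) ∂μA) ∂P)
    -- common support: f(A, η, U) > 0 a.s.
    (hf_pos : ∀ᵐ ω ∂P, 0 < f (A ω, η ω, U ω))
    -- and f(a, η(ω), U(ω)) > 0 for μ_A ⊗ ℙ-a.e. (a, ω) with π(a) ≠ 0
    (hf_pos' : ∀ᵐ p ∂(μA.prod P), π p.1 ≠ 0 → 0 < f (p.1, η p.2, U p.2))
    -- integrability of the IPW integrand Y π(A) / f(A, η, U)
    (hIPWInt : Integrable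
      (fun ω => g (A ω, U ω, ε ω) * π (A ω) / f (A ω, η ω, U ω)) P)
    -- integrability of (a, ω) ↦ g(a, U(ω), ε(ω)) π(a) w.r.t. μ_A ⊗ ℙ
    (hJInt : Integrable (fun p : 𝓐 × Ω => g (p.1, U p.2, ε p.2) * π p.1) (μA.prod P)) :
    ∫ ω, g (A ω, U ω, ε ω) * π (A ω) / f (A ω, η ω, U ω) ∂P
      = ∫ ω, (∫ a, g (a, U ω, ε ω) * π a ∂μA) ∂P := by
  exact (icc_lemma5_ipw_observed_confounders_general P μA A (fun ω ↦ (η ω, U ω)) ε hA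
    (hη.prodMk hU) hε (fun x ↦ g (x.1, x.2.1.2, x.2.2)) π (by fun_prop) hπ hindep f hf hf_nonneg
    hf_density hf_pos' hJInt).2
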